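/- For all integers m, n ≥ 2, χ_la(C_{2m} ∨ C_{2n−1}) = 5. -/

import Mathlib

open Finset SimpleGraph
open scoped Classical

/-- The induced vertex label (weight) of `x`: the sum of `f` over all edges incident to `x`. -/
noncomputable def vertexWeight {V : Type*} [Fintype V] (G : SimpleGraph V)
    (f : Sym2 V → ℕ) (x : V) : ℕ :=
  ∑ e ∈ G.edgeFinset.filter (fun e => x ∈ e), f e

/-- `f` is a local antimagic labeling of `G`: it restricts to a bijection from the edge set of
`G` onto `{1, …, q}` (where `q` is the number of edges), and adjacent vertices get distinct
induced vertex labels. -/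
def IsLocalAntimagic {V : Type*} [Fintype V] (G : SimpleGraph V) (f : Sym2 V → ℕ) : Prop :=
  Set.BijOn f G.edgeSet (Set.Icc 1 G.edgeSet.ncard) ∧
  ∀ ⦃x y : V⦄, G.Adj x y → vertexWeight G f x ≠ vertexWeight G f y

/-- The number of distinct induced vertex labels, `c(f)`. -/
noncomputable def colorCount {V : Type*} [Fintype V] (G : SimpleGraph V)
    (f : Sym2 V → ℕ) : ℕ :=
  (Finset.univ.image (vertexWeight G f)).card

/-- The local antimagic chromatic number `χ_la(G)`. -/
noncomputable def chiLA {V : Type*} [Fintype V] (G : SimpleGraph V) : ℕ :=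
  sInf { n | ∃ f : Sym2 V → ℕ, IsLocalAntimagic G f ∧ colorCount G f = n }

/-- The join `G ∨ H` of two vertex-disjoint graphs. -/
def joinG {α β : Type*} (G : SimpleGraph α) (H : SimpleGraph β) : SimpleGraph (α ⊕ β) :=
  SimpleGraph.fromRel (fun x y =>
    (∃ a b, x = Sum.inl a ∧ y = Sum.inl b ∧ G.Adj a b) ∨
    (∃ a b, x = Sum.inr a ∧ y = Sum.inr b ∧ H.Adj a b) ∨
    (∃ a b, x = Sum.inl a ∧ y = Sum.inr b))

/-!
The weights of a local antimagic labeling form a proper colouring, so `χ_la ≥ χ`, and the chromatic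
number of a join is at least the sum of those of its factors, here `2 + 3`. Conversely it is enough
to find a labeling whose weights depend, injectively, only on the colour of the vertex in an optimal
colouring.

The zigzag `1, n, 2, n - 1, …` along the edges of `C_n` gives the vertices the weights `n + 1` and
`n + 2` in turn, except for the last vertex. On the odd cycle this already follows its 3-colouring.
The edges between the cycles are labeled by a `2m × (2t + 3)` matrix of consecutive integers with
constant column sums, whose row sums depend only on the parity of the row, up to an excess that
repairs the defect of the zigzag at the last vertex of the even cycle.
-/

theorem bijOn_union_of_disjoint {α β : Type*} {f : α → β} {s₁ s₂ : Set α} {t₁ t₂ : Set β}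
    (h₁ : Set.BijOn f s₁ t₁) (h₂ : Set.BijOn f s₂ t₂) (ht : Disjoint t₁ t₂) :
    Set.BijOn f (s₁ ∪ s₂) (t₁ ∪ t₂) := by
  refine h₁.union h₂ ?_
  have hs : Disjoint s₁ s₂ := (ht.preimage f).mono h₁.mapsTo h₂.mapsTo
  exact (Set.injOn_union hs).2
    ⟨h₁.injOn, h₂.injOn, fun a ha b hb => ht.ne_of_mem (h₁.mapsTo ha) (h₂.mapsTo hb)⟩

theorem bijOn_univ_of_injective_of_card_le {α β : Type*} [Fintype α] {f : α → β} {s : Finset β}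
    (hmaps : ∀ a, f a ∈ s) (hinj : Function.Injective f) (hcard : s.card ≤ Fintype.card α) :
    Set.BijOn f Set.univ s := by
  have himage : univ.image f = s :=
    eq_of_subset_of_card_le (image_subset_iff.2 fun a _ => hmaps a)
      (by rwa [card_image_of_injective _ hinj, card_univ])
  rw [← himage, coe_image, coe_univ]
  exact hinj.injOn.bijOn_image

section LocalAntimagic

variable {V : Type*} [Fintype V] {G : SimpleGraph V} {f : Sym2 V → ℕ}

theorem vertexWeight_eq_sum_adj (G : SimpleGraph V) (f : Sym2 V → ℕ) (x : V)
    [DecidablePred (G.Adj x)] :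
    vertexWeight G f x = ∑ y with G.Adj x y, f s(x, y) := by
  have hedges : G.edgeFinset.filter (x ∈ ·) = (univ.filter (G.Adj x)).image (s(x, ·)) := by
    ext e
    simp only [mem_filter, mem_edgeFinset, mem_image, mem_univ, true_and]
    constructor
    · rintro ⟨he, y, rfl⟩
      exact ⟨y, he, rfl⟩
    · rintro ⟨y, hy, rfl⟩
      exact ⟨hy, Sym2.mem_mk_left x y⟩
  rw [vertexWeight, hedges, sum_image fun y _ z _ h => Sym2.congr_right.1 h]

theorem IsLocalAntimagic.chromaticNumber_le_colorCount (hf : IsLocalAntimagic G f) :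
    G.chromaticNumber ≤ colorCount G f := by
  let C : G.Coloring (univ.image (vertexWeight G f)) :=
    Coloring.mk (fun x => ⟨vertexWeight G f x, mem_image_of_mem _ (mem_univ x)⟩)
      fun hxy h => hf.2 hxy (congrArg Subtype.val h)
  simpa only [Fintype.card_coe, colorCount] using C.colorable.chromaticNumber_le

theorem chiLA_eq_card_of_coloring {γ : Type*} [Fintype γ] {q : ℕ} (C : G.Coloring γ)
    (hC : Fintype.card γ ≤ G.chromaticNumber) (hf : Set.BijOn f G.edgeSet (Set.Icc 1 q))
    {ω : γ → ℤ} (hω : Function.Injective ω) (hweight : ∀ x, (vertexWeight G f x : ℤ) = ω (C x)) :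
    chiLA G = Fintype.card γ := by
  have hq : G.edgeSet.ncard = q := by
    rw [hf.ncard_eq, Set.ncard_eq_toFinset_card', Set.toFinset_Icc, Nat.card_Icc,
      Nat.add_sub_cancel]
  have hanti : IsLocalAntimagic G f := by
    refine ⟨hq ▸ hf, fun x y hxy h => C.valid hxy (hω ?_)⟩
    rw [← hweight, ← hweight, h]
  have hlower {g : Sym2 V → ℕ} (hg : IsLocalAntimagic G g) : Fintype.card γ ≤ colorCount G g :=
    Nat.cast_le.1 (hC.trans hg.chromaticNumber_le_colorCount)
  have hupper : colorCount G f ≤ Fintype.card γ := by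
    rw [colorCount, ← card_image_of_injective _ (Nat.cast_injective (R := ℤ)), ← card_univ,
      ← card_image_of_injective univ hω]
    refine card_le_card fun w hw => ?_
    simp only [mem_image, mem_univ, true_and, exists_exists_eq_and] at hw ⊢
    obtain ⟨x, rfl⟩ := hw
    exact ⟨C x, (hweight x).symm⟩
  refine le_antisymm (Nat.sInf_le ⟨f, hanti, hupper.antisymm (hlower hanti)⟩) ?_
  refine le_csInf ⟨_, f, hanti, rfl⟩ ?_
  rintro _ ⟨g, hg, rfl⟩
  exact hlower hg

end LocalAntimagic

section Join

variable {α β : Type*} {G : SimpleGraph α} {H : SimpleGraph β}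

theorem joinG_adj_inl_inl {a a' : α} : (joinG G H).Adj (.inl a) (.inl a') ↔ G.Adj a a' := by
  simpa [joinG, G.adj_comm a' a] using G.ne_of_adj

theorem joinG_adj_inr_inr {b b' : β} : (joinG G H).Adj (.inr b) (.inr b') ↔ H.Adj b b' := by
  simpa [joinG, H.adj_comm b' b] using H.ne_of_adj

theorem joinG_adj_inl_inr (a : α) (b : β) : (joinG G H).Adj (.inl a) (.inr b) := by
  simp [joinG]

theorem edgeSet_joinG : (joinG G H).edgeSet =
    Sym2.map .inl '' G.edgeSet ∪ Sym2.map .inr '' H.edgeSet ∪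
      Set.range fun p : α × β => s(.inl p.1, .inr p.2) := by
  ext e
  induction e using Sym2.ind with | _ x y
  constructor
  · intro h
    rcases x with a | b <;> rcases y with a' | b'
    · exact .inl (.inl ⟨s(a, a'), joinG_adj_inl_inl.1 h, rfl⟩)
    · exact .inr ⟨(a, b'), rfl⟩
    · exact .inr ⟨(a', b), Sym2.eq_swap⟩
    · exact .inl (.inr ⟨s(b, b'), joinG_adj_inr_inr.1 h, rfl⟩)
  · rintro ((⟨e, he, h⟩ | ⟨e, he, h⟩) | ⟨⟨a, b⟩, h⟩) <;> rw [← h]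
    · induction e using Sym2.ind with | _ a a'
      exact joinG_adj_inl_inl.2 he
    · induction e using Sym2.ind with | _ b b'
      exact joinG_adj_inr_inr.2 he
    · exact joinG_adj_inl_inr a b

/-- The colouring of a join that uses disjoint palettes on the two sides. -/
def joinColoring {γ δ : Type*} (C : G.Coloring γ) (D : H.Coloring δ) :
    (joinG G H).Coloring (γ ⊕ δ) :=
  Coloring.mk (Sum.map C D) <| by
    rintro (a | b) (a' | b') h
    · exact Sum.inl_injective.ne (C.valid (joinG_adj_inl_inl.1 h))
    · exact Sum.inl_ne_inr
    · exact Sum.inr_ne_inl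
    · exact Sum.inr_injective.ne (D.valid (joinG_adj_inr_inr.1 h))

theorem chromaticNumber_add_le_chromaticNumber_joinG :
    G.chromaticNumber + H.chromaticNumber ≤ (joinG G H).chromaticNumber := by
  refine le_iInf₂ fun k ⟨C⟩ => ?_
  let S : Set (Fin k) := Set.range (C ∘ .inl)
  let T : Set (Fin k) := Set.range (C ∘ .inr)
  have hST : Disjoint S T := by
    rw [Set.disjoint_left]
    rintro _ ⟨a, rfl⟩ ⟨b, hab⟩
    exact C.valid (joinG_adj_inl_inr a b) hab.symm
  have hG : G.Colorable (Fintype.card S) :=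
    (Coloring.mk (fun a => (⟨_, a, rfl⟩ : S)) fun h h' =>
      C.valid (joinG_adj_inl_inl.2 h) (congrArg Subtype.val h')).colorable
  have hH : H.Colorable (Fintype.card T) :=
    (Coloring.mk (fun b => (⟨_, b, rfl⟩ : T)) fun h h' =>
      C.valid (joinG_adj_inr_inr.2 h) (congrArg Subtype.val h')).colorable
  have hcard : Fintype.card S + Fintype.card T ≤ k := by
    rw [← Set.toFinset_card, ← Set.toFinset_card,
      ← card_union_of_disjoint (Set.disjoint_toFinset.2 hST)]
    exact card_finset_fin_le _
  exact (add_le_add hG.chromaticNumber_le hH.chromaticNumber_le).trans (mod_cast hcard)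

/-- The edge labeling of a join given by `g` and `h` on the edges of the two factors and by `c` on
the edges between them. -/
def joinLabeling (g : Sym2 α → ℕ) (h : Sym2 β → ℕ) (c : α → β → ℕ) : Sym2 (α ⊕ β) → ℕ :=
  Sym2.lift ⟨fun
    | .inl a, .inl a' => g s(a, a')
    | .inr b, .inr b' => h s(b, b')
    | .inl a, .inr b | .inr b, .inl a => c a b, by
    rintro (a | b) (a' | b') <;> simp only [Sym2.eq_swap]⟩

variable {g : Sym2 α → ℕ} {h : Sym2 β → ℕ} {c : α → β → ℕ}

theorem vertexWeight_joinLabeling_inl [Fintype α] [Fintype β] (a : α) :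
    vertexWeight (joinG G H) (joinLabeling g h c) (.inl a) =
      vertexWeight G g a + ∑ b, c a b := by
  simp only [vertexWeight_eq_sum_adj, sum_filter, Fintype.sum_sum_type, joinG_adj_inl_inl,
    joinG_adj_inl_inr, if_true]
  rfl

theorem vertexWeight_joinLabeling_inr [Fintype α] [Fintype β] (b : β) :
    vertexWeight (joinG G H) (joinLabeling g h c) (.inr b) =
      vertexWeight H h b + ∑ a, c a b := by
  simp only [vertexWeight_eq_sum_adj, sum_filter, Fintype.sum_sum_type, joinG_adj_inr_inr,
    (joinG_adj_inl_inr _ _).symm, if_true, add_comm]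
  rfl

theorem bijOn_joinLabeling {s t u : Set ℕ} (hg : Set.BijOn g G.edgeSet s)
    (hh : Set.BijOn h H.edgeSet t) (hc : Set.BijOn (Function.uncurry c) Set.univ u)
    (hst : Disjoint s t) (hstu : Disjoint (s ∪ t) u) :
    Set.BijOn (joinLabeling g h c) (joinG G H).edgeSet (s ∪ t ∪ u) := by
  have hleft : joinLabeling g h c ∘ Sym2.map .inl = g := by
    ext e
    induction e using Sym2.ind with | _ a a'
    rfl
  have hright : joinLabeling g h c ∘ Sym2.map .inr = h := by
    ext e
    induction e using Sym2.ind with | _ b b'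
    rfl
  have hcross : Function.Injective fun p : α × β => s(Sum.inl p.1, Sum.inr p.2) := by
    rintro ⟨a, b⟩ ⟨a', b'⟩
    simp
  rw [edgeSet_joinG, ← Set.image_univ]
  refine bijOn_union_of_disjoint (bijOn_union_of_disjoint ?_ ?_ hst) ?_ hstu
  · rwa [← Set.bijOn_comp_iff (Sym2.map.injective Sum.inl_injective).injOn, hleft]
  · rwa [← Set.bijOn_comp_iff (Sym2.map.injective Sum.inr_injective).injOn, hright]
  · rwa [← Set.bijOn_comp_iff hcross.injOn]

end Join

section Cycle

variable {n : ℕ}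

/-- The edge labeling of a cycle in which the edge from the predecessor of `i` to `i` has label
`e i`; off the cycle it takes the junk value `0`. -/
noncomputable def cycleLabeling (e : Fin n → ℕ) : Sym2 (Fin n) → ℕ :=
  Function.extend (fun i => s((finRotate n).symm i, i)) e 0

theorem val_finRotate (i : Fin n) :
    (finRotate n i : ℕ) = if (i : ℕ) + 1 = n then 0 else (i : ℕ) + 1 := by
  obtain ⟨k, rfl⟩ := Nat.exists_eq_succ_of_ne_zero i.pos.ne'
  rw [coe_finRotate]
  simp only [Fin.ext_iff, Fin.val_last, Nat.succ_inj]

theorem cycleGraph_adj_iff_finRotate (hn : 2 ≤ n) {i j : Fin n} :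
    (cycleGraph n).Adj i j ↔ j = finRotate n i ∨ j = (finRotate n).symm i := by
  obtain ⟨k, rfl⟩ := Nat.exists_eq_add_of_le' hn
  rw [cycleGraph_adj, sub_eq_iff_eq_add', sub_eq_iff_eq_add', or_comm, Equiv.eq_symm_apply,
    finRotate_apply, finRotate_apply, eq_comm (a := i)]

theorem finRotate_ne_finRotate_symm (hn : 3 ≤ n) (i : Fin n) :
    finRotate n i ≠ (finRotate n).symm i := by
  intro h
  have hi := congrArg Fin.val ((Equiv.eq_symm_apply _).1 h)
  simp only [val_finRotate] at hi
  grind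

theorem injective_cycleEdge (hn : 3 ≤ n) :
    Function.Injective fun i => s((finRotate n).symm i, i) := by
  intro i j h
  rcases Sym2.eq_iff.1 h with ⟨-, hij⟩ | ⟨hij, hji⟩
  · exact hij
  · exact absurd ((Equiv.symm_apply_eq _).1 hij).symm (hji ▸ finRotate_ne_finRotate_symm hn j)

theorem range_cycleEdge (hn : 2 ≤ n) :
    Set.range (fun i => s((finRotate n).symm i, i)) = (cycleGraph n).edgeSet := by
  ext e
  induction e using Sym2.ind with | _ i j
  rw [mem_edgeSet, cycleGraph_adj_iff_finRotate hn]
  constructor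
  · rintro ⟨k, hk⟩
    rcases Sym2.eq_iff.1 hk with ⟨rfl, rfl⟩ | ⟨rfl, rfl⟩
    · exact .inl ((finRotate n).apply_symm_apply k).symm
    · exact .inr rfl
  · rintro (rfl | rfl)
    · exact ⟨finRotate n i, by simp only [Equiv.symm_apply_apply]⟩
    · exact ⟨i, Sym2.eq_swap⟩

theorem cycleLabeling_symm_finRotate (hn : 3 ≤ n) (e : Fin n → ℕ) (i : Fin n) :
    cycleLabeling e s((finRotate n).symm i, i) = e i :=
  (injective_cycleEdge hn).extend_apply e 0 i

theorem vertexWeight_cycleLabeling (hn : 3 ≤ n) (e : Fin n → ℕ) (i : Fin n) :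
    vertexWeight (cycleGraph n) (cycleLabeling e) i = e i + e (finRotate n i) := by
  have hneighbors : univ.filter ((cycleGraph n).Adj i) = {(finRotate n).symm i, finRotate n i} := by
    ext j
    simp only [mem_filter, mem_univ, true_and, mem_insert, mem_singleton, or_comm,
      cycleGraph_adj_iff_finRotate (Nat.le_of_succ_le hn)]
  have hnext : cycleLabeling e s(i, finRotate n i) = e (finRotate n i) := by
    simpa only [Equiv.symm_apply_apply] using cycleLabeling_symm_finRotate hn e (finRotate n i)
  rw [vertexWeight_eq_sum_adj, hneighbors, sum_pair (finRotate_ne_finRotate_symm hn i).symm,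
    Sym2.eq_swap, cycleLabeling_symm_finRotate hn, hnext]

theorem bijOn_cycleLabeling (hn : 3 ≤ n) {e : Fin n → ℕ} {s : Set ℕ}
    (he : Set.BijOn e Set.univ s) :
    Set.BijOn (cycleLabeling e) (cycleGraph n).edgeSet s := by
  rw [← range_cycleEdge (Nat.le_of_succ_le hn), ← Set.image_univ,
    ← Set.bijOn_comp_iff (injective_cycleEdge hn).injOn]
  exact he.congr fun i _ => (cycleLabeling_symm_finRotate hn e i).symm

/-- The zigzag `1, n, 2, n - 1, …`, whose consecutive sums alternate between `n + 1` and `n + 2`. -/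
def zigzag (n i : ℕ) : ℕ := if i % 2 = 0 then i / 2 + 1 else n - i / 2

theorem zigzag_add_zigzag_finRotate (i : Fin n) :
    zigzag n i + zigzag n (finRotate n i) =
      if (i : ℕ) + 1 = n then n / 2 + 2 else if (i : ℕ) % 2 = 0 then n + 1 else n + 2 := by
  have hi := i.isLt
  rw [val_finRotate]
  unfold zigzag
  split_ifs <;> omega

theorem bijOn_add_zigzag (c n : ℕ) :
    Set.BijOn (fun i : Fin n => c + zigzag n i) Set.univ (Set.Icc (c + 1) (c + n)) := by
  rw [← coe_Icc]
  refine bijOn_univ_of_injective_of_card_le (fun i => ?_) (fun i j h => Fin.ext ?_) (by simp)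
  · simp only [mem_Icc, zigzag]
    grind
  · simp only [zigzag] at h
    grind

end Cycle

section CrossMatrix

/-- The row `2 * m - 1 - 2 * k` of the matrix `crossEntry`, for `k < m`. Columns `0`, `1`, `2` carry
the row sum; ordered by `spread`, column `0` lies innermost and column `1` on both sides of column
`2`. From column `3` on the entries cancel in pairs. -/
def topEntry (m k : ℕ) : ℕ → ℤ
  | 0 => if k ≤ m / 2 then 2 * k else -2 * (k - (m / 2 : ℕ))
  | 1 =>
    if k = 0 then 2 * m + (m / 2 : ℕ) + 1
    else if k ≤ m / 2 then m + (m / 2 : ℕ) + 1 - k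
    else 2 * m + 1 + k
  | 2 => if k ≤ m / 2 then 2 * m + (m / 2 : ℕ) - k else m + k
  | j + 3 => (-1) ^ j * ((2 * (j / 2) + 3) * m + 2 * k + 1 : ℕ)

/-- The sum in column `j` of the `k`-th pair of rows of the matrix `crossEntry`. Column `2` puts its
whole sum on the pair `k = 0`, which pays for the excess `m` of `topEntry m 0`. -/
def pairSum (m k j : ℕ) : ℤ := if j = 2 then if k = 0 then m else 0 else 1

/-- The matrix of the labels of the edges between `C_{2m}` and an odd cycle, centred so that they
fill an interval symmetric about `1 / 2`. The pairs of rows are numbered from the bottom up, so that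
the excess of `topEntry m 0` meets the last vertex of `C_{2m}`, where the zigzag falls `m` short. -/
def crossEntry (m i j : ℕ) : ℤ :=
  let k := m - 1 - i / 2
  if i % 2 = 0 then pairSum m k j - topEntry m k j else topEntry m k j

theorem sum_topEntry (m k t : ℕ) :
    ∑ j ∈ range (2 * t + 3), topEntry m k j =
      3 * m + 2 * (m / 2 : ℕ) + 1 + if k = 0 then (m : ℤ) else 0 := by
  induction t with
  | zero =>
    simp only [mul_zero, zero_add, sum_range_succ, sum_range_zero, topEntry]
    split_ifs <;> omega
  | succ t ih =>
    have hcancel : topEntry m k (2 * t + 3) + topEntry m k (2 * t + 1 + 3) = 0 := by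
      have hhalf : (2 * t + 1) / 2 = 2 * t / 2 := by omega
      rw [topEntry, topEntry, pow_succ, hhalf]
      ring
    rw [show 2 * (t + 1) + 3 = 2 * t + 3 + 1 + 1 by ring, sum_range_succ, sum_range_succ,
      add_assoc, ih]
    exact (congrArg _ hcancel).trans (add_zero _)

theorem sum_pairSum_row (m k t : ℕ) :
    ∑ j ∈ range (2 * t + 3), pairSum m k j = 2 * t + 2 + if k = 0 then (m : ℤ) else 0 := by
  induction t with
  | zero => simp [sum_range_succ, pairSum]
  | succ t ih =>
    rw [show 2 * (t + 1) + 3 = 2 * t + 3 + 1 + 1 by ring, sum_range_succ, sum_range_succ, ih]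
    simp only [pairSum, Nat.reduceEqDiff, if_false]
    push_cast
    ring

theorem sum_pairSum_column (m j : ℕ) : ∑ k ∈ range m, pairSum m k j = m := by
  by_cases hj : j = 2
  · simp +contextual [pairSum, hj]
  · simp [pairSum, hj]

theorem sum_crossEntry_row {m i : ℕ} (hi : i < 2 * m) (t : ℕ) :
    ∑ j ∈ range (2 * t + 3), crossEntry m i j =
      if i % 2 = 0 then 2 * t + 1 - 3 * (m : ℤ) - 2 * (m / 2 : ℕ)
      else 3 * m + 2 * (m / 2 : ℕ) + 1 + if i + 1 = 2 * m then (m : ℤ) else 0 := by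
  by_cases hpar : i % 2 = 0
  · simp only [crossEntry, hpar, if_true, sum_sub_distrib, sum_pairSum_row, sum_topEntry]
    ring
  · have hlast : m - 1 - i / 2 = 0 ↔ i + 1 = 2 * m := by omega
    simp only [crossEntry, hpar, if_false, sum_topEntry, hlast]

theorem sum_range_two_mul {A : Type*} [AddCommMonoid A] (a : ℕ → A) (n : ℕ) :
    ∑ i ∈ range (2 * n), a i = ∑ k ∈ range n, (a (2 * k) + a (2 * k + 1)) := by
  induction n with
  | zero => rfl
  | succ n ih => rw [mul_add_one, sum_range_succ, sum_range_succ, sum_range_succ, ih, add_assoc]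

theorem sum_crossEntry_column (m j : ℕ) :
    ∑ i ∈ range (2 * m), crossEntry m i j = m := by
  have hpair (k : ℕ) :
      crossEntry m (2 * k) j + crossEntry m (2 * k + 1) j = pairSum m (m - 1 - k) j := by
    have hhalf : (2 * k + 1) / 2 = k := by omega
    simp [crossEntry, hhalf]
  rw [sum_range_two_mul, sum_congr rfl fun k _ => hpair k, sum_range_reflect (pairSum m · j),
    sum_pairSum_column]

/-- Twice the distance from `x` to `1 / 2`, the centre of the interval filled by `crossEntry`; it
does not distinguish the entries `x` and `1 - x` of a pair of rows. -/
def spread (x : ℤ) : ℤ := |2 * x - 1|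

theorem spread_one_sub (x : ℤ) : spread (1 - x) = spread x := by
  rw [spread, spread, ← abs_neg]
  ring_nf

theorem spread_crossEntry_zero_lt {m i : ℕ} (hi : i < 2 * m) :
    spread (crossEntry m i 0) < 2 * m := by
  simp only [spread, abs_eq_max_neg, crossEntry, pairSum, topEntry, OfNat.zero_ne_ofNat, if_false]
  split_ifs <;> omega

theorem spread_crossEntry_one_mem {m i : ℕ} (hi : i < 2 * m) :
    spread (crossEntry m i 1) ∈
      Set.Ioo (2 * m : ℤ) (2 * (m + (m / 2 : ℕ))) ∪
        Set.Ioo (2 * (2 * m + (m / 2 : ℕ)) : ℤ) (6 * m) := by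
  simp only [spread, abs_eq_max_neg, crossEntry, pairSum, topEntry, Set.mem_union, Set.mem_Ioo]
  split_ifs <;> omega

theorem spread_crossEntry_two_mem {m i : ℕ} (hi : i < 2 * m) :
    spread (crossEntry m i 2) ∈
      Set.Ioo (2 * (m + (m / 2 : ℕ)) : ℤ) (2 * (2 * m + (m / 2 : ℕ))) := by
  simp only [spread, abs_eq_max_neg, crossEntry, pairSum, topEntry, Set.mem_Ioo]
  split_ifs <;> omega

theorem spread_crossEntry_add_three (m i j : ℕ) :
    spread (crossEntry m i (j + 3)) =
      2 * ((2 * (j / 2) + 3) * m + 2 * (m - 1 - i / 2) + j % 2 : ℕ) + 1 := by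
  have htop : spread (topEntry m (m - 1 - i / 2) (j + 3)) =
      2 * ((2 * (j / 2) + 3) * m + 2 * (m - 1 - i / 2) + j % 2 : ℕ) + 1 := by
    rw [topEntry, spread]
    rcases Nat.mod_two_eq_zero_or_one j with hj | hj
    · rw [(Nat.even_iff.2 hj).neg_one_pow, one_mul, abs_of_nonneg] <;> omega
    · rw [(Nat.odd_iff.2 hj).neg_one_pow, neg_one_mul, abs_of_nonpos] <;> omega
  by_cases hpar : i % 2 = 0
  · simp only [crossEntry, hpar, if_true, pairSum, Nat.reduceEqDiff, if_false, spread_one_sub, htop]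
  · simp only [crossEntry, hpar, if_false, htop]

theorem spread_crossEntry_lt_of_lt_three {m i j : ℕ} (hi : i < 2 * m) (hj : j < 3) :
    spread (crossEntry m i j) < 6 * m := by
  have hzero := spread_crossEntry_zero_lt hi
  have hone := spread_crossEntry_one_mem hi
  have htwo := spread_crossEntry_two_mem hi
  simp only [Set.mem_union, Set.mem_Ioo] at hone htwo
  interval_cases j <;> omega

theorem spread_crossEntry_lt {m i j t : ℕ} (hi : i < 2 * m) (hj : j < 2 * t + 3) :
    spread (crossEntry m i j) < 2 * ((2 * t + 3) * m : ℕ) := by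
  rcases Nat.lt_or_ge j 3 with hcore | htail
  · refine (spread_crossEntry_lt_of_lt_three hi hcore).trans_le ?_
    have := Nat.mul_le_mul_right m (Nat.le_add_left 3 (2 * t))
    omega
  · obtain ⟨j, rfl⟩ := Nat.exists_eq_add_of_le' htail
    have := Nat.mul_le_mul_right m (show 2 * (j / 2) + 3 + 2 ≤ 2 * t + 3 by omega)
    rw [spread_crossEntry_add_three]
    lia

theorem crossEntry_inj_of_lt_three {m i i' j j' : ℕ} (hi : i < 2 * m)
    (hi' : i' < 2 * m) (hj : j < 3) (hj' : j' < 3) (h : crossEntry m i j = crossEntry m i' j') :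
    i = i' ∧ j = j' := by
  have hcolumn : j = j' := by
    have hzero {i} := spread_crossEntry_zero_lt (m := m) (i := i)
    have hone {i} := spread_crossEntry_one_mem (m := m) (i := i)
    have htwo {i} := spread_crossEntry_two_mem (m := m) (i := i)
    simp only [Set.mem_union, Set.mem_Ioo] at hone htwo
    interval_cases j <;> interval_cases j' <;> grind
  subst hcolumn
  refine ⟨?_, rfl⟩
  unfold crossEntry at h
  interval_cases j <;> simp only [pairSum, topEntry] at h <;> grind

theorem crossEntry_inj_of_three_le {m i i' j j' : ℕ} (hi : i < 2 * m) (hi' : i' < 2 * m)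
    (h : crossEntry m i (j + 3) = crossEntry m i' (j' + 3)) : i = i' ∧ j = j' := by
  have hspread := congrArg spread h
  simp only [spread_crossEntry_add_three] at hspread
  have hblock : j / 2 = j' / 2 := by
    rcases Nat.lt_trichotomy (j / 2) (j' / 2) with hlt | heq | hlt
    · have := Nat.mul_le_mul_right m (show 2 * (j / 2) + 3 + 2 ≤ 2 * (j' / 2) + 3 by omega)
      lia
    · exact heq
    · have := Nat.mul_le_mul_right m (show 2 * (j' / 2) + 3 + 2 ≤ 2 * (j / 2) + 3 by omega)
      lia
  rw [hblock] at hspread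
  have hj : j = j' := by omega
  have hrow : i / 2 = i' / 2 := by omega
  subst hj
  refine ⟨?_, rfl⟩
  simp only [crossEntry, hrow, pairSum] at h
  grind

theorem crossEntry_inj {m i i' j j' : ℕ} (hi : i < 2 * m) (hi' : i' < 2 * m)
    (h : crossEntry m i j = crossEntry m i' j') : i = i' ∧ j = j' := by
  have hcore {i j : ℕ} := spread_crossEntry_lt_of_lt_three (m := m) (i := i) (j := j)
  have htail (i j : ℕ) : 6 * m < spread (crossEntry m i (j + 3)) := by
    have := Nat.mul_le_mul_right m (Nat.le_add_left 3 (2 * (j / 2)))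
    rw [spread_crossEntry_add_three]
    omega
  rcases Nat.lt_or_ge j 3 with hj | hj <;> rcases Nat.lt_or_ge j' 3 with hj' | hj'
  · exact crossEntry_inj_of_lt_three hi hi' hj hj' h
  · obtain ⟨j', rfl⟩ := Nat.exists_eq_add_of_le' hj'
    exact absurd (h ▸ hcore hi hj) (htail i' j').not_gt
  · obtain ⟨j, rfl⟩ := Nat.exists_eq_add_of_le' hj
    exact absurd (h ▸ hcore hi' hj') (htail i j).not_gt
  · obtain ⟨j, rfl⟩ := Nat.exists_eq_add_of_le' hj
    obtain ⟨j', rfl⟩ := Nat.exists_eq_add_of_le' hj'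
    exact (crossEntry_inj_of_three_le hi hi' h).imp_right (congrArg (· + 3))

end CrossMatrix

section EvenCycleJoinOddCycle

/-- The common amount by which the entries of `crossEntry` are raised to become the labels that
follow the `2 * m + (2 * t + 3)` labels spent on the two cycles. -/
def crossShift (m t : ℕ) : ℕ := 2 * m + (2 * t + 3) + (2 * t + 3) * m

/-- The labels of the edges between `C_{2m}` and `C_{2t+3}`. -/
def crossLabel (m t : ℕ) (i : Fin (2 * m)) (j : Fin (2 * t + 3)) : ℕ :=
  (crossShift m t + crossEntry m i j).toNat

theorem crossEntry_mem_Icc (m t : ℕ) (i : Fin (2 * m)) (j : Fin (2 * t + 3)) :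
    crossEntry m i j ∈ Set.Icc (1 - ((2 * t + 3) * m : ℕ) : ℤ) ((2 * t + 3) * m : ℕ) := by
  have hspread := abs_lt.1 (spread_crossEntry_lt i.isLt j.isLt)
  rw [Set.mem_Icc]
  omega

theorem cast_crossLabel (m t : ℕ) (i : Fin (2 * m)) (j : Fin (2 * t + 3)) :
    (crossLabel m t i j : ℤ) = crossShift m t + crossEntry m i j := by
  have hmem := crossEntry_mem_Icc m t i j
  rw [Set.mem_Icc] at hmem
  rw [crossLabel, Int.toNat_of_nonneg]
  rw [crossShift]
  omega

theorem sum_crossLabel_row (m t : ℕ) (i : Fin (2 * m)) :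
    ((∑ j, crossLabel m t i j : ℕ) : ℤ) = ((2 * t + 3) * crossShift m t : ℕ) +
      if (i : ℕ) % 2 = 0 then 2 * t + 1 - 3 * (m : ℤ) - 2 * (m / 2 : ℕ)
      else 3 * m + 2 * (m / 2 : ℕ) + 1 + if (i : ℕ) + 1 = 2 * m then (m : ℤ) else 0 := by
  rw [Nat.cast_sum, ← sum_crossEntry_row i.isLt, ← Fin.sum_univ_eq_sum_range (crossEntry m i)]
  simp only [cast_crossLabel, sum_add_distrib, sum_const, card_univ, Fintype.card_fin,
    nsmul_eq_mul, Nat.cast_mul]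

theorem sum_crossLabel_column (m t : ℕ) (j : Fin (2 * t + 3)) :
    ((∑ i, crossLabel m t i j : ℕ) : ℤ) = (2 * m * crossShift m t : ℕ) + m := by
  rw [Nat.cast_sum, ← sum_crossEntry_column m j,
    ← Fin.sum_univ_eq_sum_range (crossEntry m · j)]
  simp only [cast_crossLabel, sum_add_distrib, sum_const, card_univ, Fintype.card_fin,
    nsmul_eq_mul, Nat.cast_mul]

theorem bijOn_crossLabel (m t : ℕ) :
    Set.BijOn (Function.uncurry (crossLabel m t)) Set.univ
      (Set.Icc (2 * m + (2 * t + 3) + 1) (2 * m + (2 * t + 3) + 2 * m * (2 * t + 3))) := by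
  rw [← coe_Icc]
  refine bijOn_univ_of_injective_of_card_le ?_ ?_ ?_
  · rintro ⟨i, j⟩
    have hmem := crossEntry_mem_Icc m t i j
    have hcast := cast_crossLabel m t i j
    rw [Set.mem_Icc] at hmem
    rw [crossShift] at hcast
    rw [mem_Icc, Function.uncurry_apply_pair]
    lia
  · rintro ⟨i, j⟩ ⟨i', j'⟩ h
    have hcast := congrArg (Nat.cast : ℕ → ℤ) h
    simp only [Function.uncurry_apply_pair, cast_crossLabel, add_right_inj] at hcast
    obtain ⟨hi, hj⟩ := crossEntry_inj i.isLt i'.isLt hcast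
    exact Prod.ext (Fin.ext hi) (Fin.ext hj)
  · simp

/-- The local antimagic labeling of `C_{2m} ∨ C_{2t+3}`: zigzags on the two cycles, followed by the
labels of the edges between them. -/
noncomputable def evenJoinOddLabeling (m t : ℕ) : Sym2 (Fin (2 * m) ⊕ Fin (2 * t + 3)) → ℕ :=
  joinLabeling (cycleLabeling fun i => zigzag (2 * m) i)
    (cycleLabeling fun j => 2 * m + zigzag (2 * t + 3) j) (crossLabel m t)

theorem bijOn_evenJoinOddLabeling {m : ℕ} (hm : 2 ≤ m) (t : ℕ) :
    Set.BijOn (evenJoinOddLabeling m t)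
      (joinG (cycleGraph (2 * m)) (cycleGraph (2 * t + 3))).edgeSet
      (Set.Icc 1 (2 * m + (2 * t + 3) + 2 * m * (2 * t + 3))) := by
  have heven := bijOn_cycleLabeling (n := 2 * m) (by omega)
    (by simpa only [zero_add] using bijOn_add_zigzag 0 (2 * m))
  have hodd := bijOn_cycleLabeling (by omega) (bijOn_add_zigzag (2 * m) (2 * t + 3))
  have hlabels : Set.Icc 1 (2 * m + (2 * t + 3) + 2 * m * (2 * t + 3)) =
      Set.Icc 1 (2 * m) ∪ Set.Icc (2 * m + 1) (2 * m + (2 * t + 3)) ∪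
        Set.Icc (2 * m + (2 * t + 3) + 1) (2 * m + (2 * t + 3) + 2 * m * (2 * t + 3)) := by
    ext
    simp only [Set.mem_union, Set.mem_Icc]
    lia
  rw [hlabels]
  refine bijOn_joinLabeling heven hodd (bijOn_crossLabel m t) ?_ ?_ <;> grind

/-- The weights of `evenJoinOddLabeling` in terms of the 2-colouring of the even cycle and the
3-colouring of the odd cycle. -/
def evenJoinOddWeight (m t : ℕ) : Bool ⊕ Fin 3 → ℤ
  | .inl true => ((2 * t + 3) * crossShift m t : ℕ) + (2 * t + 2 - m - 2 * (m / 2 : ℕ))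
  | .inl false => ((2 * t + 3) * crossShift m t : ℕ) + (5 * m + 2 * (m / 2 : ℕ) + 3)
  | .inr 0 => (2 * m * crossShift m t : ℕ) + (5 * m + 2 * t + 4)
  | .inr 1 => (2 * m * crossShift m t : ℕ) + (5 * m + 2 * t + 5)
  | .inr 2 => (2 * m * crossShift m t : ℕ) + (5 * m + t + 3)

theorem injective_evenJoinOddWeight {m : ℕ} (hm : 2 ≤ m) (t : ℕ) :
    Function.Injective (evenJoinOddWeight m t) := by
  have hseparated (b : Bool) (c : Fin 3) :
      evenJoinOddWeight m t (.inl b) ≠ evenJoinOddWeight m t (.inr c) := by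
    have hshift : crossShift m t = 2 * m + (2 * t + 3) + (2 * t + 3) * m := rfl
    rcases Nat.lt_or_ge (2 * t + 3) (2 * m) with h | h
    · have hgap := Nat.mul_le_mul_right (crossShift m t) (Nat.succ_le_of_lt h)
      have hcross := Nat.mul_le_mul_right m (Nat.le_add_left 3 (2 * t))
      rw [Nat.succ_mul] at hgap
      cases b <;> fin_cases c <;> simp only [evenJoinOddWeight] <;> omega
    · have hgap := Nat.mul_le_mul_right (crossShift m t) (show 2 * m + 1 ≤ 2 * t + 3 by omega)
      have hcross := Nat.mul_le_mul_right m (show 5 ≤ 2 * t + 3 by omega)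
      rw [Nat.succ_mul] at hgap
      cases b <;> fin_cases c <;> simp only [evenJoinOddWeight] <;> omega
  rintro (b | c) (b' | c') h
  · cases b <;> cases b' <;> first | rfl | (simp only [evenJoinOddWeight] at h; omega)
  · exact absurd h (hseparated b c')
  · exact absurd h.symm (hseparated b' c)
  · fin_cases c <;> fin_cases c' <;> first | rfl | (simp only [evenJoinOddWeight] at h; omega)

/-- The optimal colouring of `C_{2m} ∨ C_{2t+3}` that the weights follow. -/
def evenJoinOddColoring (m t : ℕ) :
    (joinG (cycleGraph (2 * m)) (cycleGraph (2 * t + 3))).Coloring (Bool ⊕ Fin 3) :=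
  joinColoring (cycleGraph.bicoloring_of_even (2 * m) (even_two_mul m))
    (cycleGraph.tricoloring (2 * t + 3) (by omega))

theorem evenJoinOddColoring_inl (m t : ℕ) (i : Fin (2 * m)) :
    evenJoinOddColoring m t (.inl i) = .inl (decide ((i : ℕ) % 2 = 0)) :=
  rfl

theorem evenJoinOddColoring_inr (m t : ℕ) (j : Fin (2 * t + 3)) :
    evenJoinOddColoring m t (.inr j) =
      .inr (if (j : ℕ) + 1 = 2 * t + 3 then 2 else if (j : ℕ) % 2 = 0 then 0 else 1) := by
  have hcolor : evenJoinOddColoring m t (.inr j) =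
    .inr (if (j : ℕ) = 2 * t + 3 - 1 then 2 else ⟨j % 2, by omega⟩) := rfl
  rw [hcolor]
  grind

theorem vertexWeight_evenJoinOddLabeling {m : ℕ} (hm : 2 ≤ m) (t : ℕ)
    (x : Fin (2 * m) ⊕ Fin (2 * t + 3)) :
    (vertexWeight (joinG (cycleGraph (2 * m)) (cycleGraph (2 * t + 3)))
      (evenJoinOddLabeling m t) x : ℤ) = evenJoinOddWeight m t (evenJoinOddColoring m t x) := by
  rcases x with i | j
  · rw [evenJoinOddLabeling, vertexWeight_joinLabeling_inl, vertexWeight_cycleLabeling (by omega),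
      zigzag_add_zigzag_finRotate, evenJoinOddColoring_inl, Nat.cast_add, sum_crossLabel_row]
    by_cases hpar : (i : ℕ) % 2 = 0
    · simp only [hpar, decide_true, if_true, evenJoinOddWeight]
      split_ifs <;> omega
    · simp only [hpar, decide_false, if_false, evenJoinOddWeight]
      split_ifs <;> omega
  · rw [evenJoinOddLabeling, vertexWeight_joinLabeling_inr, vertexWeight_cycleLabeling (by omega),
      add_add_add_comm, zigzag_add_zigzag_finRotate, evenJoinOddColoring_inr, Nat.cast_add,
      sum_crossLabel_column]
    split_ifs <;> simp only [evenJoinOddWeight] <;> omega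

end EvenCycleJoinOddCycle

/-- Theorem: For all integers `m, n ≥ 2`, `χ_la(C_{2m} ∨ C_{2n−1}) = 5`. -/
theorem chiLA_evenCycle_join_oddCycle (m n : ℕ) (hm : 2 ≤ m) (hn : 2 ≤ n) :
    chiLA (joinG (cycleGraph (2 * m)) (cycleGraph (2 * n - 1))) = 5 := by
  obtain ⟨t, ht⟩ : ∃ t, 2 * n - 1 = 2 * t + 3 := ⟨n - 2, by omega⟩
  have hchi : Fintype.card (Bool ⊕ Fin 3) ≤
      (joinG (cycleGraph (2 * m)) (cycleGraph (2 * t + 3))).chromaticNumber := by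
    convert chromaticNumber_add_le_chromaticNumber_joinG
    rw [chromaticNumber_cycleGraph_of_even _ (by omega) (even_two_mul m),
      chromaticNumber_cycleGraph_of_odd _ (by omega) ⟨t + 1, by ring⟩]
    rfl
  rw [ht, chiLA_eq_card_of_coloring (evenJoinOddColoring m t) hchi (bijOn_evenJoinOddLabeling hm t)
    (injective_evenJoinOddWeight hm t) (vertexWeight_evenJoinOddLabeling hm t)]
  rfl
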